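/- Suppose Φ is infinite, and define E₂ = ⋃ L(ρ̂₁, ρ̂₂) ∩ Q̂, the union over all pairs of distinct positive roots ρ₁, ρ₂ ∈ Φ⁺, where L(ρ̂₁,ρ̂₂) is the affine line through ρ̂₁ and ρ̂₂. Then E₂ ⊆ E(Φ) and E₂ is dense in E(Φ); equivalently, since E(Φ) is closed, E(Φ) is the topological closure of E₂. -/

import Mathlib

open Filter Topology

noncomputable section

variable {ι V : Type*} [Fintype ι] [NormedAddCommGroup V] [NormedSpace ℝ V]

/-- The set of simple `B`-reflections: the linear automorphisms of `V` given by the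
`B`-reflection formula `u ↦ u - 2 (B α u / B α α) • α` associated to a simple root `α ∈ Δ`. -/
def simpleReflections (B : LinearMap.BilinForm ℝ V) (Δ : Module.Basis ι ℝ V) :
    Set (V ≃ₗ[ℝ] V) :=
  { e | ∃ i : ι, ∀ u : V, e u = u - (2 * B (Δ i) u / B (Δ i) (Δ i)) • Δ i }

/-- The geometric Coxeter group `W`: the subgroup of linear automorphisms of `V`
generated by the simple `B`-reflections. -/
def cox (B : LinearMap.BilinForm ℝ V) (Δ : Module.Basis ι ℝ V) : Subgroup (V ≃ₗ[ℝ] V) :=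
  Subgroup.closure (simpleReflections B Δ)

/-- The root system `Φ = W ⬝ Δ`. -/
def Phi (B : LinearMap.BilinForm ℝ V) (Δ : Module.Basis ι ℝ V) : Set V :=
  { ρ | ∃ w ∈ cox B Δ, ∃ i : ι, w (Δ i) = ρ }

/-- The positive roots `Φ⁺ = Φ ∩ cone(Δ)`. -/
def posPhi (B : LinearMap.BilinForm ℝ V) (Δ : Module.Basis ι ℝ V) : Set V :=
  { ρ ∈ Phi B Δ | ∀ i : ι, 0 ≤ Δ.repr ρ i }

/-- `|v|₁`: the sum of the coordinates of `v` in the basis `Δ`. -/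
def l1 (Δ : Module.Basis ι ℝ V) (v : V) : ℝ := ∑ i : ι, Δ.repr v i

/-- The normalization map `v ↦ v̂ = v / |v|₁`. -/
def nrm (Δ : Module.Basis ι ℝ V) (v : V) : V := (l1 Δ v)⁻¹ • v

/-- The set `Φ̂` of normalized roots. -/
def nPhi (B : LinearMap.BilinForm ℝ V) (Δ : Module.Basis ι ℝ V) : Set V :=
  nrm Δ '' posPhi B Δ

/-- `E(Φ)`: the set of accumulation points of the set of normalized roots. -/
def Eset (B : LinearMap.BilinForm ℝ V) (Δ : Module.Basis ι ℝ V) : Set V :=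
  { x | AccPt x (𝓟 (nPhi B Δ)) }

/-- The isotropic cone `Q` of `B`. -/
def isoQ (B : LinearMap.BilinForm ℝ V) : Set V := { v | B v v = 0 }

/-- The affine line through two points `a` and `b`. -/
def lineThrough (a b : V) : Set V := { y : V | ∃ t : ℝ, y = a + t • (b - a) }

/-- `E₂`: the union over all pairs of distinct positive roots `ρ₁, ρ₂` of
`L(ρ̂₁, ρ̂₂) ∩ Q̂`. -/
def E2 (B : LinearMap.BilinForm ℝ V) (Δ : Module.Basis ι ℝ V) : Set V :=
  { x : V | ∃ ρ₁ ∈ posPhi B Δ, ∃ ρ₂ ∈ posPhi B Δ, ρ₁ ≠ ρ₂ ∧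
      x ∈ lineThrough (nrm Δ ρ₁) (nrm Δ ρ₂) ∧ B x x = 0 ∧ l1 Δ x = 1 }

/-- `E₂°`: the union over all `α ∈ Δ` and `ρ ∈ Φ⁺` with `ρ̂ ≠ α` of `L(α, ρ̂) ∩ Q̂`. -/
def E2circ (B : LinearMap.BilinForm ℝ V) (Δ : Module.Basis ι ℝ V) : Set V :=
  { x : V | ∃ i : ι, ∃ ρ ∈ posPhi B Δ, nrm Δ ρ ≠ Δ i ∧
      x ∈ lineThrough (Δ i) (nrm Δ ρ) ∧ B x x = 0 ∧ l1 Δ x = 1 }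

set_option linter.unusedSectionVars false

structure Hyp (B : LinearMap.BilinForm ℝ V) (Δ : Module.Basis ι ℝ V) : Prop where
  symm : ∀ u v : V, B u v = B v u
  diag : ∀ i : ι, B (Δ i) (Δ i) = 1
  off : ∀ i j : ι, i ≠ j → B (Δ i) (Δ j) ≤ -1 ∨
      ∃ k : ℕ, 2 ≤ k ∧ B (Δ i) (Δ j) = -Real.cos (Real.pi / (k : ℝ))

section part1

variable {B : LinearMap.BilinForm ℝ V} {Δ : Module.Basis ι ℝ V}

theorem exists_refl (H : Hyp B Δ) (ρ : V) (h : B ρ ρ = 1) :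
    ∃ e : V ≃ₗ[ℝ] V, ∀ u, e u = u - (2 * B ρ u) • ρ :=
  ⟨Module.reflection (x := ρ) (f := (2:ℝ) • B ρ) (by simp [h]), fun u => by
    simp [Module.reflection_apply]⟩

open Classical in
/-- simple reflection -/
def sr (B : LinearMap.BilinForm ℝ V) (Δ : Module.Basis ι ℝ V) (i : ι) : V ≃ₗ[ℝ] V :=
  if h : ∃ e : V ≃ₗ[ℝ] V, ∀ u, e u = u - (2 * B (Δ i) u) • Δ i then h.choose else 1

theorem sr_apply (H : Hyp B Δ) (i : ι) (u : V) : sr B Δ i u = u - (2 * B (Δ i) u) • Δ i := by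
  have h := exists_refl H (Δ i) (H.diag i)
  rw [sr, dif_pos h]
  exact h.choose_spec u

theorem sr_self (H : Hyp B Δ) (i : ι) : sr B Δ i (Δ i) = - Δ i := by
  rw [sr_apply H, H.diag]; module

theorem sr_mul_self (H : Hyp B Δ) (i : ι) : sr B Δ i * sr B Δ i = 1 := by
  ext u
  simp only [LinearEquiv.mul_apply, LinearEquiv.coe_one, id_eq]
  rw [sr_apply H, sr_apply H]
  simp only [map_sub, map_smul, smul_eq_mul, H.diag]
  module

theorem simple_eq (H : Hyp B Δ) : simpleReflections B Δ = Set.range (sr B Δ) := by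
  ext e
  constructor
  · rintro ⟨i, hi⟩
    refine ⟨i, ?_⟩
    ext u
    rw [sr_apply H, hi, H.diag, div_one]
  · rintro ⟨i, rfl⟩
    exact ⟨i, fun u => by rw [sr_apply H, H.diag, div_one]⟩

theorem sr_mem (H : Hyp B Δ) (i : ι) : sr B Δ i ∈ cox B Δ := by
  apply Subgroup.subset_closure
  rw [simple_eq H]; exact ⟨i, rfl⟩

theorem cox_induct (H : Hyp B Δ) {p : (V ≃ₗ[ℝ] V) → Prop} (h1 : p 1)
    (hs : ∀ w i, w ∈ cox B Δ → p w → p (w * sr B Δ i)) {w : V ≃ₗ[ℝ] V} (hw : w ∈ cox B Δ) : p w := by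
  rw [cox, simple_eq H] at hw
  induction hw using Subgroup.closure_induction_right with
  | one => exact h1
  | mul_right x hx y hy ih =>
    obtain ⟨i, rfl⟩ := hy
    exact hs x i (by rw [cox, simple_eq H]; exact hx) ih
  | mul_inv_cancel x hx y hy ih =>
    obtain ⟨i, rfl⟩ := hy
    rw [inv_eq_of_mul_eq_one_left (sr_mul_self H i)]
    exact hs x i (by rw [cox, simple_eq H]; exact hx) ih

theorem cox_B (H : Hyp B Δ) {w : V ≃ₗ[ℝ] V} (hw : w ∈ cox B Δ) : ∀ u v, B (w u) (w v) = B u v := by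
  refine cox_induct H (p := fun w => ∀ u v, B (w u) (w v) = B u v) (by simp) ?_ hw
  intro w i _ ih u v
  simp only [LinearEquiv.mul_apply]
  rw [ih, sr_apply H, sr_apply H]
  simp only [map_sub, map_smul, smul_eq_mul, LinearMap.sub_apply, LinearMap.smul_apply, H.diag]
  rw [H.symm u (Δ i)]
  ring

/-- words -/
def isW (B : LinearMap.BilinForm ℝ V) (Δ : Module.Basis ι ℝ V) : ℕ → (V ≃ₗ[ℝ] V) → Prop
  | 0, w => w = 1
  | n+1, w => ∃ v i, isW B Δ n v ∧ w = v * sr B Δ i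

open Classical in
def len (B : LinearMap.BilinForm ℝ V) (Δ : Module.Basis ι ℝ V) (w : V ≃ₗ[ℝ] V) : ℕ :=
  sInf {n | isW B Δ n w}

theorem isW_ex (H : Hyp B Δ) {w : V ≃ₗ[ℝ] V} (hw : w ∈ cox B Δ) : ∃ n, isW B Δ n w := by
  refine cox_induct H (p := fun w => ∃ n, isW B Δ n w) ⟨0, rfl⟩ ?_ hw
  rintro w i _ ⟨n, hn⟩
  exact ⟨n+1, w, i, hn, rfl⟩

theorem isW_len (H : Hyp B Δ) {w : V ≃ₗ[ℝ] V} (hw : w ∈ cox B Δ) : isW B Δ (len B Δ w) w :=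
  Nat.sInf_mem (s := {n | isW B Δ n w}) (isW_ex H hw)

theorem isW_mem (H : Hyp B Δ) {n : ℕ} {w : V ≃ₗ[ℝ] V} (h : isW B Δ n w) : w ∈ cox B Δ := by
  induction n generalizing w with
  | zero => rw [show w = 1 from h]; exact one_mem _
  | succ n ih => obtain ⟨v, i, hv, rfl⟩ := h; exact mul_mem (ih hv) (sr_mem H i)

theorem len_le {n : ℕ} {w : V ≃ₗ[ℝ] V} (h : isW B Δ n w) : len B Δ w ≤ n := Nat.sInf_le h

theorem len_mul (H : Hyp B Δ) {w : V ≃ₗ[ℝ] V} (hw : w ∈ cox B Δ) (i : ι) :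
    len B Δ (w * sr B Δ i) ≤ len B Δ w + 1 := len_le ⟨w, i, isW_len H hw, rfl⟩

theorem mul_sr_sr (H : Hyp B Δ) (w : V ≃ₗ[ℝ] V) (i : ι) : w * sr B Δ i * sr B Δ i = w := by
  rw [mul_assoc, sr_mul_self H, mul_one]

theorem len_mul' (H : Hyp B Δ) {w : V ≃ₗ[ℝ] V} (hw : w ∈ cox B Δ) (i : ι) :
    len B Δ w ≤ len B Δ (w * sr B Δ i) + 1 := by
  have := len_mul H (mul_mem hw (sr_mem H i)) i
  rwa [mul_sr_sr H] at this

theorem len_desc (H : Hyp B Δ) {w : V ≃ₗ[ℝ] V} (hw : w ∈ cox B Δ) (h0 : len B Δ w ≠ 0) :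
    ∃ j, len B Δ (w * sr B Δ j) + 1 = len B Δ w := by
  have h := isW_len H hw
  obtain ⟨n, hn⟩ := Nat.exists_eq_succ_of_ne_zero h0
  rw [hn] at h
  obtain ⟨v, j, hv, hvw⟩ := h
  refine ⟨j, ?_⟩
  have h1 := len_mul' H hw j
  have : w * sr B Δ j = v := by rw [hvw, mul_sr_sr H]
  rw [this] at h1 ⊢
  have := len_le hv
  omega

/-- Chebyshev-like numbers -/
def Sq (c : ℝ) : ℕ → ℝ
  | 0 => 0
  | 1 => 1
  | n+2 => 2 * c * Sq c (n+1) - Sq c n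

theorem Sq_mono {c : ℝ} (hc : 1 ≤ c) (n : ℕ) : 0 ≤ Sq c n ∧ Sq c n ≤ Sq c (n+1) := by
  induction n with
  | zero => simp [Sq]
  | succ n ih =>
    refine ⟨ih.1.trans ih.2, ?_⟩
    show _ ≤ 2 * c * Sq c (n+1) - Sq c n
    nlinarith [ih.1, ih.2]

theorem Sq_sin (θ : ℝ) (n : ℕ) : Sq (Real.cos θ) n * Real.sin θ = Real.sin (n * θ) ∧
    Sq (Real.cos θ) (n+1) * Real.sin θ = Real.sin ((n+1 : ℕ) * θ) := by
  induction n with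
  | zero => simp [Sq]
  | succ n ih =>
    refine ⟨ih.2, ?_⟩
    show (2 * Real.cos θ * Sq (Real.cos θ) (n+1) - Sq (Real.cos θ) n) * Real.sin θ = _
    have e1 : ((n+1+1 : ℕ) : ℝ) * θ = ((n+1 : ℕ) : ℝ) * θ + θ := by push_cast; ring
    have e2 : (n : ℝ) * θ = ((n+1 : ℕ) : ℝ) * θ - θ := by push_cast; ring
    have h1 := ih.1
    rw [e2, Real.sin_sub] at h1
    rw [e1, Real.sin_add, sub_mul, h1, mul_assoc, ih.2]
    ring

def lt' (i j : ι) (n : ℕ) : ι := if n % 2 = 0 then j else i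

def dq (B : LinearMap.BilinForm ℝ V) (Δ : Module.Basis ι ℝ V) (w : V ≃ₗ[ℝ] V) (i j : ι) :
    ℕ → (V ≃ₗ[ℝ] V)
  | 0 => w
  | n+1 => dq B Δ w i j n * sr B Δ (lt' i j n)

theorem lt'_two (i j : ι) (n : ℕ) : lt' i j (n+2) = lt' i j n := by simp [lt']

theorem lt'_B (H : Hyp B Δ) (i j : ι) (n : ℕ) :
    B (Δ (lt' i j n)) (Δ (lt' i j (n+1))) = B (Δ i) (Δ j) := by
  rcases Nat.mod_two_eq_zero_or_one n with h | h
  · simp [lt', h, Nat.add_mod, H.symm (Δ j)]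
  · simp [lt', h, Nat.add_mod]

theorem dq_mem (H : Hyp B Δ) {w : V ≃ₗ[ℝ] V} (hw : w ∈ cox B Δ) (i j : ι) (n : ℕ) :
    dq B Δ w i j n ∈ cox B Δ := by
  induction n with
  | zero => exact hw
  | succ n ih => exact mul_mem ih (sr_mem H _)

theorem dq_back (H : Hyp B Δ) (w : V ≃ₗ[ℝ] V) (i j : ι) (n : ℕ) :
    dq B Δ w i j n = dq B Δ w i j (n+1) * sr B Δ (lt' i j n) := by
  rw [dq, mul_sr_sr H]

theorem dq_formula (H : Hyp B Δ) (w : V ≃ₗ[ℝ] V) (i j : ι) (n : ℕ) :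
    w (Δ i) = Sq (-B (Δ i) (Δ j)) (n+1) • dq B Δ w i j n (Δ (lt' i j (n+1)))
      + Sq (-B (Δ i) (Δ j)) n • dq B Δ w i j n (Δ (lt' i j n)) := by
  induction n with
  | zero => simp [Sq, dq, lt']
  | succ n ih =>
    rw [ih, dq_back H]
    simp only [LinearEquiv.mul_apply]
    rw [sr_self H, sr_apply H, lt'_B H, lt'_two]
    simp only [map_sub, map_neg, map_smul]
    rw [show Sq (-B (Δ i) (Δ j)) (n+1+1) = 2 * (-B (Δ i) (Δ j)) * Sq (-B (Δ i) (Δ j)) (n+1)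
      - Sq (-B (Δ i) (Δ j)) n from rfl]
    module

theorem dq_len (H : Hyp B Δ) (w : V ≃ₗ[ℝ] V) (i j : ι) (n : ℕ) :
    ∀ g ∈ cox B Δ, len B Δ (g * (dq B Δ w i j n)⁻¹ * w) ≤ len B Δ g + n := by
  induction n with
  | zero => intro g hg; simp [dq]
  | succ n ih =>
    intro g hg
    rw [dq, mul_inv_rev, inv_eq_of_mul_eq_one_left (sr_mul_self H _), ← mul_assoc]
    have h1 := ih _ (mul_mem hg (sr_mem H (lt' i j n)))
    have h2 := len_mul H hg (lt' i j n)
    omega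

/-- nonnegative vectors -/
def NN (Δ : Module.Basis ι ℝ V) (v : V) : Prop := ∀ i, 0 ≤ Δ.repr v i

theorem NN.comb {u v : V} (hu : NN Δ u) (hv : NN Δ v) {a b : ℝ} (ha : 0 ≤ a) (hb : 0 ≤ b) :
    NN Δ (a • u + b • v) := by
  intro i
  simp only [map_add, map_smul, Finsupp.add_apply, Finsupp.smul_apply, smul_eq_mul]
  have := hu i; have := hv i
  positivity

/-- conjugation of reflections -/
theorem conj_refl (H : Hyp B Δ) {w : V ≃ₗ[ℝ] V} (hw : w ∈ cox B Δ) (i : ι) (u : V) :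
    (w * sr B Δ i * w⁻¹) u = u - (2 * B (w (Δ i)) u) • w (Δ i) := by
  have hi : w (w⁻¹ u) = u := by
    rw [← LinearEquiv.mul_apply, mul_inv_cancel]; rfl
  simp only [LinearEquiv.mul_apply]
  rw [sr_apply H, map_sub, map_smul, hi]
  rw [← cox_B H hw (Δ i), hi]

theorem main_pos (H : Hyp B Δ) (n : ℕ) : ∀ w ∈ cox B Δ, len B Δ w = n → ∀ i,
    len B Δ w ≤ len B Δ (w * sr B Δ i) → NN Δ (w (Δ i)) := by
  induction n using Nat.strong_induction_on with
  | _ n IH =>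
  intro w hw hn i hi
  by_cases h0 : len B Δ w = 0
  · have := isW_len H hw
    rw [h0] at this
    rw [show w = 1 from this]
    intro j
    simp only [LinearEquiv.coe_one, id_eq, Module.Basis.repr_self]
    classical
    rw [Finsupp.single_apply]; split_ifs <;> norm_num
  obtain ⟨j, hj⟩ := len_desc H hw h0
  have hij : i ≠ j := by rintro rfl; omega
  classical
  have hex : ∃ p, ¬ (len B Δ (dq B Δ w i j (p+1)) + (p+1) = len B Δ w) :=
    ⟨len B Δ w, by omega⟩
  obtain ⟨p, hp, hlt⟩ : ∃ p, ¬ (len B Δ (dq B Δ w i j (p+1)) + (p+1) = len B Δ w) ∧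
      ∀ q < p, len B Δ (dq B Δ w i j (q+1)) + (q+1) = len B Δ w :=
    ⟨Nat.find hex, Nat.find_spec hex, fun q hq => not_not.1 (Nat.find_min hex hq)⟩
  have hle : ∀ q ≤ p, len B Δ (dq B Δ w i j q) + q = len B Δ w := by
    intro q hq
    rcases q with _ | q
    · rfl
    · exact hlt q (by omega)
  have hp1 : p ≠ 0 := by
    rintro rfl
    apply hp
    simpa [dq, lt'] using hj
  obtain ⟨m, rfl⟩ := Nat.exists_eq_succ_of_ne_zero hp1
  have hv := dq_mem H hw i j (m+1)
  have hlv := hle (m+1) le_rfl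
  have n1 : NN Δ (dq B Δ w i j (m+1) (Δ (lt' i j (m+1)))) := by
    refine IH (len B Δ (dq B Δ w i j (m+1))) (by omega) _ hv rfl _ ?_
    have e := len_mul' H hv (lt' i j (m+1))
    rw [show dq B Δ w i j (m.succ+1) = dq B Δ w i j (m+1) * sr B Δ (lt' i j (m+1)) from rfl] at hp
    simp only [Nat.succ_eq_add_one] at hp
    omega
  have n2 : NN Δ (dq B Δ w i j (m+1) (Δ (lt' i j (m+2)))) := by
    refine IH (len B Δ (dq B Δ w i j (m+1))) (by omega) _ hv rfl _ ?_
    rw [lt'_two, ← dq_back H]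
    have := hle m (by simp)
    omega
  rw [dq_formula H w i j (m+1)]
  rcases H.off i j hij with hc | ⟨k, hk, hc⟩
  · have hc' : 1 ≤ -B (Δ i) (Δ j) := by linarith
    exact n2.comb n1 (Sq_mono hc' _).1 (Sq_mono hc' _).1
  · have hk0 : (0:ℝ) < k := by positivity
    have hk2 : (2:ℝ) ≤ k := by exact_mod_cast hk
    set θ := Real.pi / (k:ℝ) with hθ
    have hkθ : k * θ = Real.pi := by rw [hθ]; field_simp
    have hθ0 : 0 < θ := by positivity
    have hs : 0 < Real.sin θ := by
      apply Real.sin_pos_of_pos_of_lt_pi hθ0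
      nlinarith
    have hc' : -B (Δ i) (Δ j) = Real.cos θ := by linarith
    by_cases hkp : k ≤ m + 1
    · exfalso
      have hf := dq_formula H w i j k
      rw [hc'] at hf
      have s0 : Sq (Real.cos θ) k = 0 := by
        have := (Sq_sin θ k).1
        rw [hkθ, Real.sin_pi] at this
        rcases mul_eq_zero.1 this with h | h
        · exact h
        · exact absurd h hs.ne'
      have s1 : Sq (Real.cos θ) (k+1) = -1 := by
        have := (Sq_sin θ k).2
        push_cast at this
        rw [add_mul, hkθ, one_mul, add_comm Real.pi θ, Real.sin_add_pi] at this
        have h2 : (Sq (Real.cos θ) (k+1) + 1) * Real.sin θ = 0 := by linarith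
        rcases mul_eq_zero.1 h2 with h | h
        · linarith
        · exact absurd h hs.ne'
      rw [s0, s1] at hf
      have hf' : w (Δ i) = - dq B Δ w i j k (Δ (lt' i j (k+1))) := by rw [hf]; module
      obtain ⟨k', rfl⟩ : ∃ k', k = k' + 1 := ⟨k-1, by omega⟩
      have hdk := dq_mem H hw i j (k'+1)
      have hconj : w * sr B Δ i * w⁻¹ = dq B Δ w i j (k'+1) * sr B Δ (lt' i j (k'+1+1))
          * (dq B Δ w i j (k'+1))⁻¹ := by
        ext u
        rw [conj_refl H hw, conj_refl H hdk, hf']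
        simp
      have e : w * sr B Δ i = dq B Δ w i j (k'+1) * (dq B Δ w i j k')⁻¹ * w := by
        have : w * sr B Δ i = (w * sr B Δ i * w⁻¹) * w := by group
        rw [this, hconj, dq_back H w i j k', mul_inv_rev,
          inv_eq_of_mul_eq_one_left (sr_mul_self H _), lt'_two]
        group
      have h1 := dq_len H w i j k' _ hdk
      rw [← e] at h1
      have := hle (k'+1) hkp
      omega
    · have key : ∀ q : ℕ, q ≤ k → 0 ≤ Sq (Real.cos θ) q := by
        intro q hq
        have h1 := (Sq_sin θ q).1
        have hq' : (q:ℝ) ≤ k := by exact_mod_cast hq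
        have h2 : 0 ≤ Real.sin (q * θ) := by
          apply Real.sin_nonneg_of_nonneg_of_le_pi (by positivity)
          nlinarith
        rw [← h1] at h2
        exact nonneg_of_mul_nonneg_left h2 hs
      rw [hc']
      exact n2.comb n1 (key _ (by omega)) (key _ (by omega))

/-- dichotomy -/
theorem dichot (H : Hyp B Δ) {ρ : V} (h : ρ ∈ Phi B Δ) : NN Δ ρ ∨ NN Δ (-ρ) := by
  obtain ⟨w, hw, i, rfl⟩ := h
  by_cases hl : len B Δ w ≤ len B Δ (w * sr B Δ i)
  · exact Or.inl (main_pos H _ w hw rfl i hl)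
  · right
    have := main_pos H _ (w * sr B Δ i) (mul_mem hw (sr_mem H i)) rfl i
      (by rw [mul_sr_sr H]; omega)
    rwa [LinearEquiv.mul_apply, sr_self H, map_neg] at this

end part1
section part2

variable {B : LinearMap.BilinForm ℝ V} {Δ : Module.Basis ι ℝ V}

theorem Phi_B (H : Hyp B Δ) {ρ : V} (h : ρ ∈ Phi B Δ) : B ρ ρ = 1 := by
  obtain ⟨w, hw, i, rfl⟩ := h
  rw [cox_B H hw, H.diag]

theorem Phi_neg (H : Hyp B Δ) {ρ : V} (h : ρ ∈ Phi B Δ) : -ρ ∈ Phi B Δ := by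
  obtain ⟨w, hw, i, rfl⟩ := h
  refine ⟨w * sr B Δ i, mul_mem hw (sr_mem H i), i, ?_⟩
  rw [LinearEquiv.mul_apply, sr_self H, map_neg]

theorem Phi_cox {ρ : V} (h : ρ ∈ Phi B Δ) {g : V ≃ₗ[ℝ] V} (hg : g ∈ cox B Δ) :
    g ρ ∈ Phi B Δ := by
  obtain ⟨w, hw, i, rfl⟩ := h
  exact ⟨g * w, mul_mem hg hw, i, rfl⟩

theorem Phi_simple (i : ι) : Δ i ∈ Phi B Δ := ⟨1, one_mem _, i, rfl⟩

theorem pos_simple (i : ι) : Δ i ∈ posPhi B Δ := by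
  refine ⟨Phi_simple i, fun j => ?_⟩
  classical
  rw [Module.Basis.repr_self, Finsupp.single_apply]; split_ifs <;> norm_num

theorem root_refl (H : Hyp B Δ) {ρ : V} (h : ρ ∈ Phi B Δ) :
    ∃ e ∈ cox B Δ, ∀ u, e u = u - (2 * B ρ u) • ρ := by
  obtain ⟨w, hw, i, rfl⟩ := h
  exact ⟨w * sr B Δ i * w⁻¹, mul_mem (mul_mem hw (sr_mem H i)) (inv_mem hw),
    fun u => conj_refl H hw i u⟩

theorem pos_of (H : Hyp B Δ) {ρ : V} (h : ρ ∈ Phi B Δ) (i : ι) (hi : 0 < Δ.repr ρ i) :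
    ρ ∈ posPhi B Δ := by
  refine ⟨h, ?_⟩
  rcases dichot H h with h1 | h1
  · exact h1
  · have := h1 i
    simp at this
    linarith

theorem pos_or (H : Hyp B Δ) {ρ : V} (h : ρ ∈ Phi B Δ) : ρ ∈ posPhi B Δ ∨ -ρ ∈ posPhi B Δ := by
  rcases dichot H h with h1 | h1
  · exact Or.inl ⟨h, h1⟩
  · exact Or.inr ⟨Phi_neg H h, h1⟩

/-- linear version of l1 -/
def l1L (Δ : Module.Basis ι ℝ V) : V →ₗ[ℝ] ℝ := ∑ i, Δ.coord i

theorem l1_eq (v : V) : l1 Δ v = l1L Δ v := by simp [l1, l1L]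

theorem exists_pos_coord (H : Hyp B Δ) {ρ : V} (h : ρ ∈ posPhi B Δ) : ∃ i, 0 < Δ.repr ρ i := by
  by_contra! hc
  have : ρ = 0 := by
    apply Δ.ext_elem
    intro i
    simpa using le_antisymm (hc i) (h.2 i)
  have h1 := Phi_B H h.1
  rw [this] at h1
  simp at h1

theorem l1_pos (H : Hyp B Δ) {ρ : V} (h : ρ ∈ posPhi B Δ) : 0 < l1 Δ ρ := by
  obtain ⟨i, hi⟩ := exists_pos_coord H h
  exact Finset.sum_pos' (fun j _ => h.2 j) ⟨i, Finset.mem_univ _, hi⟩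

theorem contB (Δ : Module.Basis ι ℝ V) (B : LinearMap.BilinForm ℝ V) :
    Continuous (fun p : V × V => B p.1 p.2) := by
  have : FiniteDimensional ℝ V := Module.Finite.of_basis Δ
  have hc : ∀ i, Continuous (fun v : V => Δ.repr v i) := fun i =>
    (Δ.coord i).continuous_of_finiteDimensional
  have : (fun p : V × V => B p.1 p.2) =
      fun p : V × V => ∑ i, Δ.repr p.1 i * B (Δ i) p.2 := by
    funext p
    conv_lhs => rw [← Δ.sum_repr p.1]
    simp only [map_sum, map_smul, LinearMap.sum_apply, LinearMap.smul_apply, smul_eq_mul]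
  rw [this]
  refine continuous_finsetSum _ fun i _ => ?_
  exact ((hc i).comp continuous_fst).mul
    ((B (Δ i)).continuous_of_finiteDimensional.comp continuous_snd)

theorem small_id (H : Hyp B Δ) {w : V ≃ₗ[ℝ] V} (hw : w ∈ cox B Δ)
    (h1 : ∀ i, 0 < Δ.repr (w (Δ i)) i) (h2 : ∀ i, 0 < Δ.repr (w⁻¹ (Δ i)) i) : w = 1 := by
  have p1 : ∀ i, w (Δ i) ∈ posPhi B Δ := fun i => pos_of H (Phi_cox (Phi_simple i) hw) i (h1 i)
  have p2 : ∀ i, w⁻¹ (Δ i) ∈ posPhi B Δ :=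
    fun i => pos_of H (Phi_cox (Phi_simple i) (inv_mem hw)) i (h2 i)
  have key : ∀ i k, i ≠ k → Δ.repr (w (Δ i)) k = 0 := by
    intro i k hik
    have e : Δ.repr (w⁻¹ (w (Δ i))) k = 0 := by
      rw [← LinearEquiv.mul_apply, inv_mul_cancel]
      simp [Finsupp.single_apply, hik]
    rw [← Δ.sum_repr (w (Δ i))] at e
    simp only [map_sum, map_smul, Finsupp.coe_finsetSum, Finset.sum_apply, Finsupp.smul_apply,
      smul_eq_mul] at e
    rw [Finset.sum_eq_zero_iff_of_nonneg
      (fun j _ => mul_nonneg ((p1 i).2 j) ((p2 j).2 k))] at e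
    rcases mul_eq_zero.1 (e k (Finset.mem_univ _)) with h | h
    · exact h
    · exact absurd h (h2 k).ne'
  have e1 : ∀ i, w (Δ i) = Δ.repr (w (Δ i)) i • Δ i := by
    intro i
    apply Δ.ext_elem
    intro k
    by_cases hik : i = k
    · subst hik; simp
    · rw [key i k hik]; simp [Finsupp.single_apply, hik]
  apply LinearEquiv.toLinearMap_injective
  apply Δ.ext
  intro i
  have h3 := Phi_B H (p1 i).1
  rw [e1 i] at h3
  simp only [map_smul, LinearMap.smul_apply, smul_eq_mul, H.diag] at h3
  have h4 : Δ.repr (w (Δ i)) i = 1 := by nlinarith [h1 i]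
  show w (Δ i) = Δ i
  rw [e1 i, h4, one_smul]

theorem acc_infinite {x : V} {S t : Set V} (h : AccPt x (𝓟 S)) (ht : t ∈ 𝓝 x) :
    (t ∩ S).Infinite := by
  intro hf
  have h2 : AccPt x (𝓟 (t ∩ S)) := by
    have := h.nhds_inter ht
    exact this
  exact Set.Infinite.of_accPt h2 hf

theorem discrete (H : Hyp B Δ) {K : Set V} (hK : IsCompact K) : (Phi B Δ ∩ K).Finite := by
  by_contra hinf
  have : FiniteDimensional ℝ V := Module.Finite.of_basis Δ
  obtain ⟨x, hxK, hx⟩ := Set.Infinite.exists_accPt_of_subset_isCompact hinf hK Set.inter_subset_right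
  have hBx : B x x = 1 := by
    have hcl : IsClosed {v : V | B v v = 1} :=
      isClosed_eq ((contB Δ B).comp (continuous_id.prodMk continuous_id)) continuous_const
    have hsub : Phi B Δ ∩ K ⊆ {v : V | B v v = 1} := fun v hv => Phi_B H hv.1
    exact hcl.closure_subset_iff.2 hsub (mem_closure_iff_clusterPt.2 hx.clusterPt)
  have hc : ∀ i, Continuous (fun v : V => Δ.repr v i) := fun i =>
    (Δ.coord i).continuous_of_finiteDimensional
  have hcB := contB Δ B
  have hcb : ∀ f g : V × V → V, Continuous f → Continuous g → Continuous fun p => B (f p) (g p) :=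
    fun f g hf hg => hcB.comp (hf.prodMk hg)
  have ev : ∀ᶠ p in 𝓝 (x, x), ∀ i, 0 < Δ.repr ((Δ i - (2 * B p.2 (Δ i)) • p.2) -
      (2 * B p.1 (Δ i - (2 * B p.2 (Δ i)) • p.2)) • p.1) i := by
    rw [eventually_all]
    intro i
    have c2 : Continuous fun p : V × V => (Δ i - (2 * B p.2 (Δ i)) • p.2) :=
      continuous_const.sub ((continuous_const.mul (hcb _ _ continuous_snd continuous_const)).smul
        continuous_snd)
    have c1 := (hc i).comp (c2.sub ((continuous_const.mul (hcb _ _ continuous_fst c2)).smul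
        continuous_fst) : Continuous fun p : V × V => (Δ i - (2 * B p.2 (Δ i)) • p.2) -
      ((2:ℝ) * B p.1 (Δ i - (2 * B p.2 (Δ i)) • p.2)) • p.1)
    refine c1.continuousAt.eventually (lt_mem_nhds ?_)
    have : (Δ i - (2 * B x (Δ i)) • x) -
      ((2:ℝ) * B x (Δ i - (2 * B x (Δ i)) • x)) • x = Δ i := by
      simp only [map_sub, map_smul, smul_eq_mul, hBx]
      module
    show 0 < Δ.repr ((Δ i - (2 * B x (Δ i)) • x) -
      ((2:ℝ) * B x (Δ i - (2 * B x (Δ i)) • x)) • x) i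
    rw [this]; simp
  rw [nhds_prod_eq, eventually_prod_self_iff (r := fun a b => ∀ i, 0 < Δ.repr ((Δ i - (2 * B b (Δ i)) • b) -
      (2 * B a (Δ i - (2 * B b (Δ i)) • b)) • a) i)] at ev
  obtain ⟨t, ht, hr⟩ := ev
  have hI := acc_infinite hx ht
  obtain ⟨ρ, hρt, hρ, _⟩ := hI.nonempty
  apply hI
  refine (Set.toFinite {ρ, -ρ}).subset ?_
  rintro ρ' ⟨hρt', hρ', _⟩
  obtain ⟨e, he, hee⟩ := root_refl H hρ
  obtain ⟨e', he', hee'⟩ := root_refl H hρ'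
  have inv : ∀ {σ : V} (_ : σ ∈ Phi B Δ) {f : V ≃ₗ[ℝ] V} (_ : ∀ u, f u = u - (2 * B σ u) • σ),
      f * f = 1 := by
    intro σ hσ f hf
    ext u
    simp only [LinearEquiv.mul_apply, LinearEquiv.coe_one, id_eq, hf]
    simp only [map_sub, map_smul, smul_eq_mul, Phi_B H hσ]
    module
  have i1 := inv hρ hee
  have i2 := inv hρ' hee'
  have hid : e * e' = 1 := by
    apply small_id H (mul_mem he he')
    · intro i
      simp only [LinearEquiv.mul_apply, hee, hee']
      exact hr _ hρt _ hρt' i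
    · intro i
      rw [mul_inv_rev, inv_eq_of_mul_eq_one_left i1, inv_eq_of_mul_eq_one_left i2]
      simp only [LinearEquiv.mul_apply, hee, hee']
      exact hr _ hρt' _ hρt i
  have hee2 : e = e' := by
    rw [← mul_one e, ← i2, ← mul_assoc, hid, one_mul]
  have h3 : ρ' - (2 * B ρ ρ') • ρ = ρ' - (2 * B ρ' ρ') • ρ' := by rw [← hee, ← hee', hee2]
  rw [Phi_B H hρ'] at h3
  have h4 : ρ' = B ρ ρ' • ρ := by
    have : (2:ℝ) • ρ' = (2:ℝ) • (B ρ ρ' • ρ) := by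
      have := sub_right_injective h3
      rw [smul_smul, this]; simp
    exact smul_right_injective V (two_ne_zero) this
  have h5 := Phi_B H hρ'
  rw [h4] at h5
  simp only [map_smul, LinearMap.smul_apply, smul_eq_mul, Phi_B H hρ] at h5
  have h6 : B ρ ρ' = 1 ∨ B ρ ρ' = -1 := by
    apply mul_self_eq_one_iff.1
    linarith
  rcases h6 with h6 | h6
  · left; rw [h4, h6, one_smul]
  · right; rw [h4, h6]; simp

theorem compact_box (Δ : Module.Basis ι ℝ V) (M : ℝ) :
    IsCompact {v : V | ∀ i, 0 ≤ Δ.repr v i ∧ Δ.repr v i ≤ M} := by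
  have : FiniteDimensional ℝ V := Module.Finite.of_basis Δ
  have h : IsCompact (Set.pi Set.univ (fun _ : ι => Set.Icc (0:ℝ) M)) :=
    isCompact_univ_pi fun _ => isCompact_Icc
  have h2 := h.image (Δ.equivFun.symm.toLinearMap.continuous_of_finiteDimensional)
  convert h2 using 1
  ext v
  constructor
  · intro hv
    exact ⟨Δ.equivFun v, fun i _ => hv i, by simp⟩
  · rintro ⟨f, hf, rfl⟩ i
    have := hf i (Set.mem_univ _)
    have e : Δ.repr (Δ.equivFun.symm f) i = f i := by
      rw [← Module.Basis.equivFun_apply, LinearEquiv.apply_symm_apply]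
    show 0 ≤ Δ.repr (Δ.equivFun.symm f) i ∧ Δ.repr (Δ.equivFun.symm f) i ≤ M
    rw [e]; exact this

theorem finite_l1 (H : Hyp B Δ) (M : ℝ) : {ρ ∈ posPhi B Δ | l1 Δ ρ ≤ M}.Finite := by
  refine (discrete H (compact_box Δ M)).subset ?_
  rintro ρ ⟨hρ, hM⟩
  refine ⟨hρ.1, fun i => ⟨hρ.2 i, le_trans ?_ hM⟩⟩
  exact Finset.single_le_sum (f := fun i => Δ.repr ρ i) (fun j _ => hρ.2 j) (Finset.mem_univ i)

end part2
section part3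

variable {B : LinearMap.BilinForm ℝ V} {Δ : Module.Basis ι ℝ V}

theorem s_pos (H : Hyp B Δ) {γ : V} (h : γ ∈ posPhi B Δ) (i : ι) (hne : γ ≠ Δ i) :
    sr B Δ i γ ∈ posPhi B Δ := by
  have hk : ∃ k, k ≠ i ∧ 0 < Δ.repr γ k := by
    by_contra! hc
    have e : γ = Δ.repr γ i • Δ i := by
      apply Δ.ext_elem
      intro k
      by_cases hik : k = i
      · subst hik; simp
      · rw [le_antisymm (hc k hik) (h.2 k)]
        simp [Ne.symm hik]
    have h1 := Phi_B H h.1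
    rw [e] at h1
    simp only [map_smul, LinearMap.smul_apply, smul_eq_mul, H.diag] at h1
    have h2 : Δ.repr γ i = 1 := by nlinarith [h.2 i]
    rw [h2, one_smul] at e
    exact hne e
  obtain ⟨k, hki, hk⟩ := hk
  refine pos_of H (Phi_cox h.1 (sr_mem H i)) k ?_
  rw [sr_apply H]
  simpa [Ne.symm hki] using hk

theorem inv_finite (H : Hyp B Δ) {g : V ≃ₗ[ℝ] V} (hg : g ∈ cox B Δ) :
    {γ ∈ posPhi B Δ | g γ ∉ posPhi B Δ}.Finite := by
  refine cox_induct H (p := fun g => {γ ∈ posPhi B Δ | g γ ∉ posPhi B Δ}.Finite) ?_ ?_ hg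
  · convert Set.finite_empty using 1
    ext γ
    simp
  · intro w i _ ih
    have h2 := (ih.preimage ((sr B Δ i).injective.injOn)).union (Set.finite_singleton (Δ i))
    refine h2.subset ?_
    rintro γ ⟨hγ, hw⟩
    by_cases hne : γ = Δ i
    · right; exact hne
    · left; exact ⟨s_pos H hγ i hne, hw⟩

theorem descent (H : Hyp B Δ) (n : ℕ) : ∀ x : V →ₗ[ℝ] ℝ, {γ ∈ posPhi B Δ | x γ ≤ 0}.Finite →
    {γ ∈ posPhi B Δ | x γ ≤ 0}.ncard = n →
    ∃ w ∈ cox B Δ, (∀ i, 0 ≤ x (w (Δ i))) ∧ {γ ∈ posPhi B Δ | x (w γ) ≤ 0}.Finite := by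
  induction n using Nat.strong_induction_on with
  | _ n IH =>
  intro x hf hn
  by_cases hx : ∀ i, 0 ≤ x (Δ i)
  · exact ⟨1, one_mem _, hx, hf⟩
  push Not at hx
  obtain ⟨i, hi⟩ := hx
  set x' : V →ₗ[ℝ] ℝ := x ∘ₗ (sr B Δ i).toLinearMap with hx'
  have hmaps : ∀ γ ∈ {γ ∈ posPhi B Δ | x' γ ≤ 0},
      sr B Δ i γ ∈ {γ ∈ posPhi B Δ | x γ ≤ 0} \ {Δ i} := by
    rintro γ ⟨hγ, hle⟩
    have hne : γ ≠ Δ i := by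
      rintro rfl
      simp only [hx', LinearMap.comp_apply, LinearEquiv.coe_coe, sr_self H, map_neg] at hle
      linarith
    refine ⟨⟨s_pos H hγ i hne, hle⟩, ?_⟩
    intro he
    have he : sr B Δ i γ = Δ i := he
    have : γ = - Δ i := by
      apply (sr B Δ i).injective
      rw [he, map_neg, sr_self H, neg_neg]
    have h2 := hγ.2 i
    rw [this] at h2
    simp at h2
    linarith
  have hf' : {γ ∈ posPhi B Δ | x' γ ≤ 0}.Finite :=
    Set.Finite.of_injOn (f := sr B Δ i) hmaps ((sr B Δ i).injective.injOn)
      (hf.subset Set.sdiff_subset)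
  have hlt : {γ ∈ posPhi B Δ | x' γ ≤ 0}.ncard < n := by
    have h1 := Set.ncard_le_ncard_of_injOn (sr B Δ i) hmaps ((sr B Δ i).injective.injOn)
      (hf.subset Set.sdiff_subset)
    have h2 := Set.ncard_sdiff_singleton_lt_of_mem
      (show Δ i ∈ {γ ∈ posPhi B Δ | x γ ≤ 0} from ⟨pos_simple i, hi.le⟩) hf
    omega
  obtain ⟨w, hw, h1, h2⟩ := IH _ hlt x' hf' rfl
  exact ⟨sr B Δ i * w, mul_mem (sr_mem H i) hw, h1, h2⟩

/-- positive roots supported in `I` -/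
def RI (B : LinearMap.BilinForm ℝ V) (Δ : Module.Basis ι ℝ V) (I : Set ι) : Set V :=
  {γ ∈ posPhi B Δ | ∀ i, i ∉ I → Δ.repr γ i = 0}

theorem plane_finite (H : Hyp B Δ) {ρ σ : V} (hρ : ρ ∈ Phi B Δ) (hσ : σ ∈ Phi B Δ)
    (hb : |B ρ σ| < 1) : (Phi B Δ ∩ Submodule.span ℝ {ρ, σ}).Finite := by
  have hd : 0 < 1 - |B ρ σ| := by linarith
  set M := 1 / (1 - |B ρ σ|) with hM
  have hM1 : 1 ≤ M := by
    rw [hM, le_div_iff₀ hd]; linarith [abs_nonneg (B ρ σ)]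
  have hMd : M * (1 - |B ρ σ|) = 1 := by rw [hM]; field_simp
  have hcomp : IsCompact ((fun p : ℝ × ℝ => p.1 • ρ + p.2 • σ) ''
      (Set.Icc (-M) M ×ˢ Set.Icc (-M) M)) :=
    (isCompact_Icc.prod isCompact_Icc).image (by fun_prop)
  refine (discrete H hcomp).subset ?_
  rintro γ ⟨hγ, hs⟩
  refine ⟨hγ, ?_⟩
  obtain ⟨a, b, rfl⟩ := Submodule.mem_span_pair.1 hs
  have h1 := Phi_B H hγ
  simp only [map_add, map_smul, LinearMap.add_apply, LinearMap.smul_apply, smul_eq_mul,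
    Phi_B H hρ, Phi_B H hσ, H.symm σ ρ] at h1
  have h2 : (a^2 + b^2) * (1 - |B ρ σ|) ≤ 1 := by
    have : |B ρ σ| * (a^2+b^2) ≥ - (2 * a * b * B ρ σ) := by
      rcases abs_cases (B ρ σ) with ⟨h, h'⟩ | ⟨h, h'⟩
      · rw [h]; nlinarith [mul_nonneg h' (sq_nonneg (a+b))]
      · rw [h]; nlinarith [mul_nonneg (neg_nonneg.2 h'.le) (sq_nonneg (a-b))]
    nlinarith
  have h3 : a^2 + b^2 ≤ M := by
    rw [hM, le_div_iff₀ hd]; exact h2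
  have ha : |a| ≤ M := abs_le_of_sq_le_sq (by nlinarith [sq_nonneg b]) (by linarith)
  have hb' : |b| ≤ M := abs_le_of_sq_le_sq (by nlinarith [sq_nonneg a]) (by linarith)
  exact ⟨(a, b), ⟨abs_le.1 ha, abs_le.1 hb'⟩, rfl⟩

theorem F_finite (H : Hyp B Δ) {ρ σ : V} (hρ : ρ ∈ Phi B Δ) (hσ : σ ∈ Phi B Δ)
    (hb : |B ρ σ| < 1) :
    {g : V ≃ₗ[ℝ] V | g ∈ cox B Δ ∧ ∀ v, g v - v ∈ Submodule.span ℝ {ρ, σ}}.Finite := by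
  have hf := plane_finite H hρ hσ hb
  set P := Submodule.span ℝ {ρ, σ} with hP
  have hρP : ρ ∈ P := Submodule.subset_span (by simp)
  have hσP : σ ∈ P := Submodule.subset_span (by simp)
  refine Set.Finite.of_injOn (f := fun g : V ≃ₗ[ℝ] V => (g ρ, g σ))
    (t := (Phi B Δ ∩ P) ×ˢ (Phi B Δ ∩ P)) ?_ ?_ (hf.prod hf)
  · rintro g ⟨hg, hgv⟩
    refine ⟨⟨Phi_cox hρ hg, ?_⟩, ⟨Phi_cox hσ hg, ?_⟩⟩
    · have := P.add_mem (hgv ρ) hρP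
      simpa using this
    · have := P.add_mem (hgv σ) hσP
      simpa using this
  · rintro g ⟨hg, hgv⟩ h ⟨hh, hhv⟩ he
    simp only [Prod.mk.injEq] at he
    ext v
    -- difference lies in P and is orthogonal to g ρ, g σ
    have hd : g v - h v ∈ P := by
      have := P.sub_mem (hgv v) (hhv v)
      simpa using this
    -- P is spanned also by images
    have o1 : B (g v - h v) (g ρ) = 0 := by
      rw [map_sub, LinearMap.sub_apply, cox_B H hg, he.1, cox_B H hh, sub_self]
    have o2 : B (g v - h v) (g σ) = 0 := by
      rw [map_sub, LinearMap.sub_apply, cox_B H hg, he.2, cox_B H hh, sub_self]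
    have hmapP : ∀ u ∈ P, g⁻¹ u ∈ P := by
      intro u hu
      have h1 := hgv (g⁻¹ u)
      have h2 : g (g⁻¹ u) = u := by
        rw [← LinearEquiv.mul_apply, mul_inv_cancel]; rfl
      rw [h2] at h1
      have := P.sub_mem hu h1
      simpa using this
    have h3 := hmapP _ hd
    obtain ⟨a, b, hab⟩ := Submodule.mem_span_pair.1 h3
    have h2 : g (g⁻¹ (g v - h v)) = g v - h v := by
      rw [← LinearEquiv.mul_apply, mul_inv_cancel]; rfl
    have e : g v - h v = a • g ρ + b • g σ := by
      rw [← h2, ← hab]; simp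
    have hgσ : B (g σ) (g ρ) = B ρ σ := by rw [cox_B H hg, H.symm]
    rw [e] at o1 o2
    simp only [map_add, map_smul, LinearMap.add_apply, LinearMap.smul_apply, smul_eq_mul,
      cox_B H hg, Phi_B H hρ, Phi_B H hσ, H.symm σ ρ] at o1 o2
    have hb2 : 0 < 1 - B ρ σ ^ 2 := by
      have := (sq_lt_one_iff_abs_lt_one (B ρ σ)).2 hb
      linarith
    have ha : a * (1 - B ρ σ ^ 2) = 0 := by linear_combination o1 - B ρ σ * o2
    have ha0 : a = 0 := (mul_eq_zero.1 ha).resolve_right hb2.ne'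
    have hb0 : b = 0 := by rw [ha0] at o2; linarith
    rw [ha0, hb0] at e
    simp at e
    exact sub_eq_zero.1 e

theorem pair_conj (H : Hyp B Δ) {ρ σ : V} (hρ : ρ ∈ Phi B Δ) (hσ : σ ∈ Phi B Δ)
    (hb : |B ρ σ| < 1) :
    ∃ I : Set ι, (RI B Δ I).Finite ∧ ∃ γ ∈ RI B Δ I, ∃ δ ∈ RI B Δ I, |B ρ σ| = |B γ δ| := by
  have hF := F_finite H hρ hσ hb
  set P := Submodule.span ℝ {ρ, σ} with hP
  have hρP : ρ ∈ P := Submodule.subset_span (by simp)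
  have hσP : σ ∈ P := Submodule.subset_span (by simp)
  set x : V →ₗ[ℝ] ℝ := ∑ g ∈ hF.toFinset, l1L Δ ∘ₗ g.toLinearMap with hx
  have hxa : ∀ v, x v = ∑ g ∈ hF.toFinset, l1L Δ (g v) := by
    intro v; simp [hx, LinearMap.sum_apply]
  have hzero : ∀ τ ∈ Phi B Δ, τ ∈ P → x τ = 0 := by
    intro τ hτ hτP
    obtain ⟨e, he, hee⟩ := root_refl H hτ
    have heτ : e τ = -τ := by rw [hee, Phi_B H hτ]; module
    have heP : ∀ v, e v - v ∈ P := by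
      intro v
      rw [hee]
      have := P.smul_mem (-(2 * B τ v)) hτP
      convert this using 1
      module
    have hee1 : e * e = 1 := by
      ext u
      simp only [LinearEquiv.mul_apply, LinearEquiv.coe_one, id_eq, hee]
      simp only [map_sub, map_smul, smul_eq_mul, Phi_B H hτ]
      module
    have h1 : x (e τ) = x τ := by
      rw [hxa, hxa]
      have hmem : ∀ g ∈ hF.toFinset, g * e ∈ hF.toFinset := by
        intro g hg
        rw [Set.Finite.mem_toFinset] at hg ⊢
        refine ⟨mul_mem hg.1 he, fun v => ?_⟩
        have := P.add_mem (hg.2 (e v)) (heP v)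
        simpa using this
      refine Finset.sum_bij' (fun g _ => g * e) (fun g _ => g * e) hmem hmem ?_ ?_ ?_
      · intro g _; simp [mul_assoc, hee1]
      · intro g _; simp [mul_assoc, hee1]
      · intro g _; simp
    rw [heτ, map_neg] at h1
    linarith
  have hZ : {γ ∈ posPhi B Δ | x γ ≤ 0}.Finite := by
    have : (⋃ g ∈ hF.toFinset, {γ ∈ posPhi B Δ | g γ ∉ posPhi B Δ}).Finite := by
      apply Set.Finite.biUnion (Finset.finite_toSet _)
      intro g hg
      have hg : g ∈ hF.toFinset := hg
      rw [Set.Finite.mem_toFinset] at hg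
      exact inv_finite H hg.1
    refine this.subset ?_
    rintro γ ⟨hγ, hle⟩
    by_contra hc
    simp only [Set.mem_iUnion, not_exists] at hc
    have hall : ∀ g ∈ hF.toFinset, 0 < l1L Δ (g γ) := by
      intro g hg
      rw [← l1_eq]
      apply l1_pos H
      by_contra h
      exact hc g hg ⟨hγ, h⟩
    have hne : hF.toFinset.Nonempty := by
      refine ⟨1, ?_⟩
      rw [Set.Finite.mem_toFinset]
      exact ⟨one_mem _, fun v => by simp⟩
    have := Finset.sum_pos hall hne
    rw [← hxa] at this
    linarith
  obtain ⟨w, hw, hw1, hw2⟩ := descent H _ x hZ rfl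
  have hwi : ∀ u, w (w⁻¹ u) = u := by
    intro u
    rw [← LinearEquiv.mul_apply, mul_inv_cancel]; rfl
  have hexp : ∀ v, x (w v) = ∑ i, Δ.repr v i * x (w (Δ i)) := by
    intro v
    conv_lhs => rw [← Δ.sum_repr v]
    simp only [map_sum, map_smul, smul_eq_mul]
  set I : Set ι := {i | x (w (Δ i)) = 0} with hI
  have hRI : (RI B Δ I).Finite := by
    refine hw2.subset ?_
    rintro γ ⟨hγ, hs⟩
    refine ⟨hγ, le_of_eq ?_⟩
    rw [hexp]
    refine Finset.sum_eq_zero fun i _ => ?_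
    by_cases hi : i ∈ I
    · rw [show x (w (Δ i)) = 0 from hi, mul_zero]
    · rw [hs i hi, zero_mul]
  have hin : ∀ τ ∈ Phi B Δ, τ ∈ P → ∃ γ ∈ RI B Δ I, w⁻¹ τ = γ ∨ w⁻¹ τ = -γ := by
    have aux : ∀ γ ∈ posPhi B Δ, x (w γ) = 0 → γ ∈ RI B Δ I := by
      intro γ hγ h0
      refine ⟨hγ, fun i hi => ?_⟩
      rw [hexp, Finset.sum_eq_zero_iff_of_nonneg
        (fun j _ => mul_nonneg (hγ.2 j) (hw1 j))] at h0
      exact (mul_eq_zero.1 (h0 i (Finset.mem_univ _))).resolve_right hi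
    intro τ hτ hτP
    have h0 := hzero τ hτ hτP
    rcases pos_or H (Phi_cox hτ (inv_mem hw)) with h | h
    · exact ⟨_, aux _ h (by rw [hwi]; exact h0), Or.inl rfl⟩
    · exact ⟨_, aux _ h (by rw [map_neg, hwi, map_neg, h0, neg_zero]), Or.inr (by simp)⟩
  obtain ⟨γ, hγ, hγ'⟩ := hin ρ hρ hρP
  obtain ⟨δ, hδ, hδ'⟩ := hin σ hσ hσP
  refine ⟨I, hRI, γ, hγ, δ, hδ, ?_⟩
  rw [← cox_B H (inv_mem hw) ρ σ]
  rcases hγ' with h | h <;> rcases hδ' with h' | h' <;> rw [h, h'] <;> simp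

theorem vals_finite (H : Hyp B Δ) :
    {t : ℝ | |t| < 1 ∧ ∃ ρ ∈ Phi B Δ, ∃ σ ∈ Phi B Δ, t = B ρ σ}.Finite := by
  have hfin : (⋃ I ∈ {I : Set ι | (RI B Δ I).Finite},
      Set.image2 (fun γ δ => |B γ δ|) (RI B Δ I) (RI B Δ I)).Finite := by
    apply Set.Finite.biUnion (Set.toFinite _)
    intro I hI
    exact Set.Finite.image2 _ hI hI
  refine (hfin.union (hfin.image Neg.neg)).subset ?_
  rintro t ⟨ht, ρ, hρ, σ, hσ, rfl⟩
  obtain ⟨I, hI, γ, hγ, δ, hδ, he⟩ := pair_conj H hρ hσ ht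
  have hm : |B ρ σ| ∈ (⋃ I ∈ {I : Set ι | (RI B Δ I).Finite},
      Set.image2 (fun γ δ => |B γ δ|) (RI B Δ I) (RI B Δ I)) := by
    rw [Set.mem_iUnion₂]
    exact ⟨I, hI, γ, hγ, δ, hδ, he.symm⟩
  rcases abs_cases (B ρ σ) with ⟨h, _⟩ | ⟨h, _⟩
  · left; rwa [h] at hm
  · right; exact ⟨_, hm, by rw [h, neg_neg]⟩

end part3
section part4

variable {B : LinearMap.BilinForm ℝ V} {Δ : Module.Basis ι ℝ V}

theorem nrm_smul {c : ℝ} (hc : c ≠ 0) (v : V) : nrm Δ (c • v) = nrm Δ v := by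
  rw [nrm, nrm, l1_eq, l1_eq, map_smul, smul_eq_mul, smul_smul]
  congr 1
  rw [mul_inv]; field_simp

theorem l1_nrm {v : V} (h : l1 Δ v ≠ 0) : l1 Δ (nrm Δ v) = 1 := by
  rw [nrm, l1_eq (_ • _), map_smul, smul_eq_mul, ← l1_eq, inv_mul_cancel₀ h]

theorem seq_roots (H : Hyp B Δ) {ρ σ : V} (hρ : ρ ∈ Phi B Δ) (hσ : σ ∈ Phi B Δ) {r : ℝ}
    (hr0 : r ≠ 0) (hr1 : r ^ 2 ≤ 1) (hr : r ^ 2 + 2 * B ρ σ * r + 1 = 0) (n : ℕ) :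
    ∃ γ ∈ Phi B Δ, ∃ g : ℝ, (2 * n + 1) * r ^ (4 * n) ≤ g ∧
      r ^ (2 * n) • γ = g • (ρ + r • σ) - r ^ (4 * n + 1) • σ := by
  induction n with
  | zero => exact ⟨ρ, hρ, 1, by simp, by simp⟩
  | succ n ih =>
    obtain ⟨γ, hγ, g, hg, he⟩ := ih
    obtain ⟨e1, he1, hee1⟩ := root_refl H hρ
    obtain ⟨e2, he2, hee2⟩ := root_refl H hσ
    have hb : B ρ σ = -(r^2+1)/(2*r) := by field_simp; linarith
    have w1 : r ^ 2 • e1 (e2 (ρ + r • σ)) = ρ + r • σ := by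
      simp only [hee1, hee2, map_add, map_sub, map_smul, smul_eq_mul, Phi_B H hρ, Phi_B H hσ,
        H.symm σ ρ, hb]
      match_scalars <;> field_simp <;> ring
    have w2 : r • e1 (e2 σ) = (-(r^2+1)) • (ρ + r • σ) + r ^ 3 • σ := by
      simp only [hee1, hee2, map_add, map_sub, map_smul, smul_eq_mul, Phi_B H hρ, Phi_B H hσ,
        H.symm σ ρ, hb]
      match_scalars <;> field_simp <;> ring
    refine ⟨e1 (e2 γ), Phi_cox (Phi_cox hγ he2) he1, g + r^(4*n+2) + r^(4*n+4), ?_, ?_⟩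
    · have hp : 0 ≤ r^(4*n) := by
        rw [show 4*n = 2*(2*n) by ring, pow_mul]; positivity
      have e3 : r^(4*n+2) = r^(4*n) * r^2 := by ring
      have e4 : r^(4*n+4) = r^(4*n) * (r^2*r^2) := by ring
      rw [show 4*(n+1) = 4*n+4 by ring, e3, e4]
      push_cast
      have hn : (0:ℝ) ≤ n := by positivity
      have q0 : 0 ≤ r^2 := sq_nonneg r
      have a1 : r^2*r^2 ≤ r^2 := by nlinarith
      have a2 : r^(4*n) * (r^2*r^2) ≤ r^(4*n) * r^2 := mul_le_mul_of_nonneg_left a1 hp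
      have a3 : r^(4*n) * r^2 ≤ r^(4*n) := by nlinarith
      nlinarith
    · have : r ^ (2*(n+1)) • e1 (e2 γ) = r^2 • e1 (e2 (r^(2*n) • γ)) := by
        simp only [map_smul]; rw [smul_smul]; congr 1; ring
      rw [this, he]
      have h2 : r^2 • e1 (e2 (g • (ρ + r • σ) - r ^ (4 * n + 1) • σ)) =
          g • (r^2 • e1 (e2 (ρ + r • σ))) - r^(4*n+2) • (r • e1 (e2 σ)) := by
        simp only [map_sub, map_smul]
        module
      rw [h2, w1, w2]
      module

theorem nrm_contAt {z : V} (hz : l1 Δ z ≠ 0) : ContinuousAt (nrm Δ) z := by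
  have : FiniteDimensional ℝ V := Module.Finite.of_basis Δ
  have hl : Continuous (l1 Δ) := by
    have : l1 Δ = l1L Δ := funext l1_eq
    rw [this]; exact (l1L Δ).continuous_of_finiteDimensional
  exact (hl.continuousAt.inv₀ hz).smul continuousAt_id

theorem iso_acc (H : Hyp B Δ) {ρ σ : V} (hρ : ρ ∈ Phi B Δ) (hσ : σ ∈ Phi B Δ) {r : ℝ}
    (hr0 : r ≠ 0) (hr1 : |r| ≤ 1) (hr : r ^ 2 + 2 * B ρ σ * r + 1 = 0)
    (hz : l1 Δ (ρ + r • σ) ≠ 0) : nrm Δ (ρ + r • σ) ∈ Eset B Δ := by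
  set z := ρ + r • σ with hzdef
  have hr2 : r ^ 2 ≤ 1 := (sq_le_one_iff_abs_le_one r).2 hr1
  show AccPt _ _
  rw [accPt_iff_nhds]
  intro U hU
  have hcont : ContinuousAt (fun e : ℝ => nrm Δ (z - e • σ)) 0 := by
    have h1 : ContinuousAt (fun e : ℝ => z - e • σ) 0 := by fun_prop
    refine ContinuousAt.comp (g := nrm Δ) ?_ h1
    simpa using nrm_contAt hz
  have hev : ∀ᶠ e : ℝ in 𝓝 0, nrm Δ (z - e • σ) ∈ U := by
    apply hcont.eventually
    simpa using hU
  obtain ⟨δ, hδ, hball⟩ := Metric.eventually_nhds_iff.1 hev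
  obtain ⟨n, hn⟩ := exists_nat_one_div_lt hδ
  obtain ⟨γ, hγ, g, hg, he⟩ := seq_roots H hρ hσ hr0 hr2 hr n
  have hp : 0 < r^(4*n) := by
    rw [show 4*n = 2*(2*n) by ring, pow_mul]; positivity
  have hn0 : (0:ℝ) ≤ n := by positivity
  have hg0 : 0 < g := lt_of_lt_of_le (by positivity) hg
  have heps : |r^(4*n+1)/g| < δ := by
    refine lt_of_le_of_lt ?_ hn
    rw [abs_div, abs_of_pos hg0, pow_succ, abs_mul, abs_of_pos hp, div_le_div_iff₀ hg0 (by positivity)]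
    have : r^(4*n) * |r| ≤ r^(4*n) := by nlinarith
    nlinarith
  have hU2 := hball (y := r^(4*n+1)/g) (by rw [Real.dist_eq, sub_zero]; exact heps)
  have hγ2 : nrm Δ γ = nrm Δ (z - (r^(4*n+1)/g) • σ) := by
    rw [← nrm_smul (pow_ne_zero (2*n) hr0) γ, he, ← nrm_smul hg0.ne' (z - _)]
    congr 1
    rw [smul_sub, smul_smul]
    congr 2
    field_simp
  rw [← hγ2] at hU2
  have hBz : B z z = 0 := by
    simp only [hzdef, map_add, map_smul, LinearMap.add_apply, LinearMap.smul_apply, smul_eq_mul,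
      Phi_B H hρ, Phi_B H hσ, H.symm σ ρ]
    linarith
  have main : ∀ τ ∈ posPhi B Δ, nrm Δ τ ≠ nrm Δ z := by
    intro τ hτ hc
    have h1 : B (nrm Δ τ) (nrm Δ τ) = B (nrm Δ z) (nrm Δ z) := by rw [hc]
    simp only [nrm, map_smul, LinearMap.smul_apply, smul_eq_mul, hBz, Phi_B H hτ.1] at h1
    have := l1_pos H hτ
    have h3 : 0 < (l1 Δ τ)⁻¹ := by positivity
    nlinarith
  rcases pos_or H hγ with h | h
  · exact ⟨nrm Δ γ, ⟨hU2, γ, h, rfl⟩, main γ h⟩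
  · have hneg : nrm Δ (-γ) = nrm Δ γ := by
      rw [← nrm_smul (by norm_num : (-1:ℝ) ≠ 0) γ]; simp
    refine ⟨nrm Δ γ, ⟨hU2, -γ, h, hneg⟩, ?_⟩
    rw [← hneg]; exact main _ h

theorem E2_sub (H : Hyp B Δ) : E2 B Δ ⊆ Eset B Δ := by
  have aux : ∀ ρ ∈ Phi B Δ, ∀ σ ∈ Phi B Δ, ∀ p q : ℝ, p ≠ 0 → q ≠ 0 → |q| ≤ |p| →
      p ^ 2 + 2 * p * q * B ρ σ + q ^ 2 = 0 → l1 Δ (p • ρ + q • σ) = 1 →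
      p • ρ + q • σ ∈ Eset B Δ := by
    intro ρ hρ σ hσ p q hp hq hqp hQ hl
    have e : p • ρ + q • σ = p • (ρ + (q/p) • σ) := by
      rw [smul_add, smul_smul]; congr 2; field_simp
    have hl2 : l1 Δ (ρ + (q/p) • σ) ≠ 0 := by
      intro h0
      rw [e, l1_eq, map_smul, ← l1_eq, h0] at hl
      simp at hl
    have h := iso_acc H hρ hσ (r := q/p) (div_ne_zero hq hp)
      (by rw [abs_div]; exact div_le_one_of_le₀ hqp (abs_nonneg _))
      (by field_simp; linarith) hl2
    rw [← nrm_smul hp, ← e, nrm, hl, inv_one, one_smul] at h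
    exact h
  rintro x ⟨ρ, hρ, σ, hσ, -, ⟨t, rfl⟩, hQ, hl⟩
  set p := (1 - t) * (l1 Δ ρ)⁻¹ with hp
  set q := t * (l1 Δ σ)⁻¹ with hq
  have e : nrm Δ ρ + t • (nrm Δ σ - nrm Δ ρ) = p • ρ + q • σ := by
    simp only [nrm, hp, hq]; module
  rw [e] at hQ hl ⊢
  simp only [map_add, map_smul, LinearMap.add_apply, LinearMap.smul_apply, smul_eq_mul,
      Phi_B H hρ.1, Phi_B H hσ.1, H.symm σ ρ] at hQ
  have hp0 : p ≠ 0 := by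
    intro h0
    rw [h0] at hQ hl
    have : q = 0 := by nlinarith
    rw [this, l1_eq] at hl
    simp at hl
  have hq0 : q ≠ 0 := by
    intro h0
    rw [h0] at hQ
    exact hp0 (by nlinarith)
  rcases le_total |q| |p| with h | h
  · exact aux ρ hρ.1 σ hσ.1 p q hp0 hq0 h (by linarith) hl
  · rw [add_comm] at hl ⊢
    exact aux σ hσ.1 ρ hρ.1 q p hq0 hp0 h (by rw [H.symm σ ρ]; linarith) hl

theorem exists_gamma (H : Hyp B Δ) {A : Set V} (hA : A ⊆ posPhi B Δ) (hinf : A.Infinite) :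
    ∃ γ ∈ posPhi B Δ, {ρ ∈ A | 1 ≤ |B γ ρ|}.Infinite := by
  by_contra! hc
  have hfin1 : (⋃ i, {ρ ∈ A | 1 ≤ |B (Δ i) ρ|}).Finite :=
    Set.finite_iUnion fun i => hc _ (pos_simple i)
  have hA' := hinf.sdiff hfin1
  apply hA'
  have hv := vals_finite H
  apply Set.Finite.of_finite_fibers (fun ρ (i : ι) => B (Δ i) ρ)
  · refine (Set.Finite.pi' (fun _ : ι => hv)).subset ?_
    rintro _ ⟨ρ, ⟨hρ, hn⟩, rfl⟩ i
    refine ⟨?_, Δ i, Phi_simple i, ρ, (hA hρ).1, rfl⟩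
    by_contra h
    apply hn
    rw [Set.mem_iUnion]
    exact ⟨i, hρ, not_lt.1 h⟩
  · rintro _ ⟨γ, ⟨hγ, hn⟩, rfl⟩
    refine (hc γ (hA hγ)).subset ?_
    rintro ρ ⟨⟨hρ, _⟩, he⟩
    refine ⟨hρ, ?_⟩
    have he : (fun i => B (Δ i) ρ) = fun i => B (Δ i) γ := he
    have h1 : B.flip ρ = B.flip γ := by
      apply Δ.ext
      intro i
      exact congrFun he i
    have h2 : B γ ρ = B γ γ := by
      have := LinearMap.congr_fun h1 γ
      simpa using this
    rw [h2, Phi_B H (hA hγ).1]; simp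

theorem exists_u {β : ℝ} (h : 1 ≤ |β|) : ∃ u : ℝ, u ^ 2 + 2 * β * u + 1 = 0 ∧ |u| ≤ 1 := by
  have h2 : 0 ≤ β ^ 2 - 1 := by
    have := (one_le_sq_iff_one_le_abs β).2 h
    linarith
  have hs := Real.sq_sqrt h2
  have hs0 := Real.sqrt_nonneg (β^2-1)
  set s := Real.sqrt (β^2-1)
  rcases le_abs.1 h with hb | hb
  · refine ⟨-β + s, by nlinarith, abs_le.2 ⟨?_, ?_⟩⟩
    · have : β - 1 ≤ s := by
        apply abs_le_of_sq_le_sq' _ hs0 |>.2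
        nlinarith
      linarith
    · have : s ≤ β := by
        apply abs_le_of_sq_le_sq' _ (by linarith) |>.2
        nlinarith
      linarith
  · refine ⟨-β - s, by nlinarith, abs_le.2 ⟨?_, ?_⟩⟩
    · have : s ≤ -β := by
        apply abs_le_of_sq_le_sq' _ (by linarith) |>.2
        nlinarith
      linarith
    · have : -β - 1 ≤ s := by
        apply abs_le_of_sq_le_sq' _ hs0 |>.2
        nlinarith
      linarith

theorem E_sub (H : Hyp B Δ) : Eset B Δ ⊆ closure (E2 B Δ) := by
  intro x hx
  rw [Metric.mem_closure_iff]
  intro ε hε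
  obtain ⟨C, hC, hCb⟩ := (compact_box Δ 1).isBounded.exists_pos_norm_le
  have hnb : ∀ ρ ∈ posPhi B Δ, ‖nrm Δ ρ‖ ≤ C := by
    intro ρ hρ
    apply hCb
    intro i
    have hl := l1_pos H hρ
    have e : Δ.repr (nrm Δ ρ) i = (l1 Δ ρ)⁻¹ * Δ.repr ρ i := by simp [nrm]
    rw [e]
    refine ⟨mul_nonneg (by positivity) (hρ.2 i), ?_⟩
    rw [inv_mul_le_iff₀ hl, mul_one]
    exact Finset.single_le_sum (f := fun i => Δ.repr ρ i) (fun j _ => hρ.2 j) (Finset.mem_univ i)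
  set A := {ρ ∈ posPhi B Δ | nrm Δ ρ ∈ Metric.ball x (ε/2)} with hA
  have hAinf : A.Infinite := by
    have h1 := acc_infinite hx (Metric.ball_mem_nhds x (half_pos hε))
    refine Set.Infinite.of_image (nrm Δ) (h1.mono ?_)
    rintro _ ⟨hy, ρ, hρ, rfl⟩
    exact ⟨ρ, ⟨hρ, hy⟩, rfl⟩
  obtain ⟨γ, hγ, hSinf⟩ := exists_gamma H (fun ρ hρ => hρ.1) hAinf
  have hlγ := l1_pos H hγ
  set l := l1 Δ γ with hl
  set M := l + 4 * C * l / ε with hM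
  obtain ⟨ρ, ⟨⟨hρ, hρx⟩, hβ⟩, hρM⟩ := (hSinf.sdiff (finite_l1 H M)).nonempty
  have hLM : M < l1 Δ ρ := by
    by_contra h
    exact hρM ⟨hρ, not_lt.1 h⟩
  set L := l1 Δ ρ with hL
  have hq : 0 < 4 * C * l / ε := by positivity
  have hLl : l < L := by linarith
  obtain ⟨u, hu, hu1⟩ := exists_u hβ
  have hul : |u * l| ≤ l := by rw [abs_mul, abs_of_pos hlγ]; nlinarith
  have hul' := abs_le.1 hul
  have hD : 0 < L + u * l := by linarith
  have hL0 : 0 < L := by linarith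
  set t := u * l / (L + u * l) with ht
  have hy : nrm Δ ρ + t • (nrm Δ γ - nrm Δ ρ) = (L + u * l)⁻¹ • (ρ + u • γ) := by
    simp only [nrm, ← hL, ← hl, ht]
    match_scalars <;> field_simp
    ring
  refine ⟨nrm Δ ρ + t • (nrm Δ γ - nrm Δ ρ), ⟨ρ, hρ, γ, hγ, ?_, ⟨t, rfl⟩, ?_, ?_⟩, ?_⟩
  · rintro rfl
    exact absurd hLl (lt_irrefl _)
  · rw [hy]
    simp only [map_add, map_smul, LinearMap.add_apply, LinearMap.smul_apply, smul_eq_mul,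
      Phi_B H hρ.1, Phi_B H hγ.1, H.symm ρ γ]
    linear_combination (L + u * l)⁻¹ * (L + u * l)⁻¹ * hu
  · rw [l1_eq, hy, map_smul, map_add, map_smul, ← l1_eq, ← l1_eq, smul_eq_mul, smul_eq_mul,
      ← hL, ← hl, inv_mul_cancel₀ hD.ne']
  · have htb : |t| ≤ l / (L - l) := by
      rw [ht, abs_div, abs_of_pos hD, div_le_div_iff₀ hD (by linarith)]
      nlinarith
    have h3 : l / (L - l) * (2 * C) < ε / 2 := by
      have : 4 * C * l / ε < L - l := by linarith
      rw [div_lt_iff₀ hε] at this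
      rw [div_mul_eq_mul_div, div_lt_iff₀ (by linarith)]
      nlinarith
    have h4 : ‖t • (nrm Δ γ - nrm Δ ρ)‖ < ε / 2 := by
      rw [norm_smul, Real.norm_eq_abs]
      have h5 : ‖nrm Δ γ - nrm Δ ρ‖ ≤ 2 * C := by
        have := norm_sub_le (nrm Δ γ) (nrm Δ ρ)
        linarith [hnb γ hγ, hnb ρ hρ]
      refine lt_of_le_of_lt ?_ h3
      exact mul_le_mul htb h5 (norm_nonneg _) (div_nonneg hlγ.le (by linarith))
    have h6 : dist x (nrm Δ ρ) < ε / 2 := by rw [dist_comm]; exact hρx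
    calc dist x _ ≤ dist x (nrm Δ ρ) + dist (nrm Δ ρ) (nrm Δ ρ + t • (nrm Δ γ - nrm Δ ρ)) :=
          dist_triangle _ _ _
      _ < ε / 2 + ε / 2 := by
          rw [dist_self_add_right]
          exact add_lt_add h6 h4
      _ = ε := by ring

end part4

/-- If `Φ` is infinite, then `E₂ ⊆ E(Φ)` and `E₂` is dense in `E(Φ)`; equivalently,
since `E(Φ)` is closed, `E(Φ)` is the topological closure of `E₂`. -/
theorem statement14 (B : LinearMap.BilinForm ℝ V) (Δ : Module.Basis ι ℝ V)
    (hsymm : ∀ u v : V, B u v = B v u)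
    (hdiag : ∀ i : ι, B (Δ i) (Δ i) = 1)
    (hoff : ∀ i j : ι, i ≠ j → B (Δ i) (Δ j) ≤ -1 ∨
      ∃ k : ℕ, 2 ≤ k ∧ B (Δ i) (Δ j) = -Real.cos (Real.pi / (k : ℝ)))
    (hinf : (Phi B Δ).Infinite) :
    E2 B Δ ⊆ Eset B Δ ∧ Eset B Δ = closure (E2 B Δ) := by
  have H : Hyp B Δ := ⟨hsymm, hdiag, hoff⟩
  have hcl : IsClosed (Eset B Δ) := isClosed_derivedSet (nPhi B Δ)
  exact ⟨E2_sub H, Set.Subset.antisymm (E_sub H) (closure_minimal (E2_sub H) hcl)⟩
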